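/- (Fractional discrete Sobolev inequality.) Let h>0 and 0<s<1/2. There is a constant C_s>0 depending only on s (independent of h) such that for every finitely supported u:ℤ→ℝ: (h·Σ_{j∈ℤ}|u_j|^{2/(1−2s)})^{(1−2s)/2} ≤ C_s·((h/2)·Σ_{j∈ℤ}Σ_{m∈ℤ, m≠j} |u_j−u_m|²·K_s^h(j−m))^{1/2}. -/

import Mathlib

/-- The kernel of the fractional discrete Laplacian on the mesh of size `h`. -/
noncomputable def Ksh (h s : ℝ) (m : ℤ) : ℝ :=
  if m = 0 then 0 else
    ((4 : ℝ) ^ s * Real.Gamma (1/2 + s) / (Real.sqrt Real.pi * (Real.Gamma (1 - s) / s))) *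
      (Real.Gamma (|(m : ℝ)| - s) / (h ^ (2 * s) * Real.Gamma (|(m : ℝ)| + 1 + s)))

/-!
The argument is pointwise. Write `T = ∑ ‖u m‖ ^ p` and fix a vertex `j`. By Chebyshev's inequality,
`‖u m‖ < ‖u j‖ / 2` for all but `T / (‖u j‖ / 2) ^ p` vertices `m`. Hence among the
`N ≈ 2 * T / (‖u j‖ / 2) ^ p` nearest neighbours of `j`, on which the kernel is at least of order
`N ^ (-(1 + α))`, at least half satisfy `‖u j - u m‖ ≥ ‖u j‖ / 2`. So the energy at `j` is at least
of order `N ^ (-α) * ‖u j‖ ^ 2`, which for `p * (1 - α) = 2` is `T ^ (-α) * ‖u j‖ ^ p`. Summing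
over `j` gives `T ^ (1 - α) ≲ energy`, and this is the Sobolev inequality. For the fractional
discrete Laplacian `α = 2 * s`, and the kernel bound comes from the log-convexity of `Γ`.
-/

open scoped Finset

section FatTail

variable {ι E : Type*} [SeminormedAddCommGroup E] {c α p : ℝ} {k : ι → ι → ℝ} {u : ι → E}

/-- `HasFatTail c α k` says that the `N`-th largest value of `k j` is at least `c / N ^ (1 + α)`,
for all `j` and `N`. This is the metric-free form of a lower bound by a multiple of
`|j - m| ^ (-(d + β))` on `ℤ ^ d`, with `α = β / d`. -/
def HasFatTail (c α : ℝ) (k : ι → ι → ℝ) : Prop :=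
  ∀ (j : ι) (N : ℕ), ∃ F : Finset ι, #F = N ∧ ∀ m ∈ F, c / (N : ℝ) ^ (1 + α) ≤ k j m

lemma card_filter_mul_le_tsum {f : ι → ℝ} (hf₀ : ∀ i, 0 ≤ f i) (hf : Summable f)
    (F : Finset ι) (t : ℝ) : #{i ∈ F | t ≤ f i} * t ≤ ∑' i, f i :=
  calc #{i ∈ F | t ≤ f i} * t ≤ ∑ i ∈ F with t ≤ f i, f i := by
        rw [← nsmul_eq_mul]
        exact Finset.card_nsmul_le_sum _ _ _ fun i hi ↦ (Finset.mem_filter.mp hi).2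
    _ ≤ ∑' i, f i := hf.sum_le_tsum _ fun i _ ↦ hf₀ i

lemma card_le_two_mul_card_filter_lt {f : ι → ℝ} (hf₀ : ∀ i, 0 ≤ f i) (hf : Summable f)
    {F : Finset ι} {t : ℝ} (ht : 0 < t) (hF : 2 * ∑' i, f i ≤ #F * t) :
    (#F : ℝ) ≤ 2 * #{i ∈ F | f i < t} := by
  have hsplit : (#{i ∈ F | f i < t} : ℝ) + #{i ∈ F | t ≤ f i} = #F := by
    simp only [← not_lt]
    exact_mod_cast Finset.card_filter_add_card_filter_not (s := F) (f · < t)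
  have hlarge : 2 * (#{i ∈ F | t ≤ f i} : ℝ) ≤ #F := by
    refine le_of_mul_le_mul_right ?_ ht
    linarith [card_filter_mul_le_tsum hf₀ hf F t]
  linarith

lemma card_mul_sq_norm_le_tsum_sq_norm_sub_mul {j : ι} (hk : ∀ m, 0 ≤ k j m)
    (hE : Summable fun m ↦ ‖u j - u m‖ ^ 2 * k j m) {G : Finset ι} {κ : ℝ}
    (hκ : ∀ m ∈ G, κ ≤ k j m) (hG : ∀ m ∈ G, ‖u m‖ ≤ ‖u j‖ / 2) :
    #G * ((‖u j‖ / 2) ^ 2 * κ) ≤ ∑' m, ‖u j - u m‖ ^ 2 * k j m := by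
  have hterm : ∀ m ∈ G, (‖u j‖ / 2) ^ 2 * κ ≤ ‖u j - u m‖ ^ 2 * k j m := fun m hm ↦ by
    have hdiff : ‖u j‖ / 2 ≤ ‖u j - u m‖ := by
      linarith [hG m hm, norm_sub_norm_le (u j) (u m)]
    calc (‖u j‖ / 2) ^ 2 * κ ≤ (‖u j‖ / 2) ^ 2 * k j m := by gcongr; exact hκ m hm
      _ ≤ ‖u j - u m‖ ^ 2 * k j m := by gcongr; exact hk m
  rw [← nsmul_eq_mul]
  exact (Finset.card_nsmul_le_sum _ _ _ hterm).trans
    (hE.sum_le_tsum _ fun m _ ↦ mul_nonneg (sq_nonneg _) (hk m))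

lemma HasFatTail.mul_sq_norm_le (hfat : HasFatTail c α k) (hc : 0 ≤ c) (hp : 0 < p)
    {j : ι} (hk : ∀ m, 0 ≤ k j m) (hu : Summable fun m ↦ ‖u m‖ ^ p)
    (hE : Summable fun m ↦ ‖u j - u m‖ ^ 2 * k j m) (hj : 0 < ‖u j‖) {N : ℕ} (hN₀ : 0 < N)
    (hN : 2 * ∑' m, ‖u m‖ ^ p ≤ N * (‖u j‖ / 2) ^ p) :
    c * ‖u j‖ ^ 2 ≤ 8 * (N : ℝ) ^ α * ∑' m, ‖u j - u m‖ ^ 2 * k j m := by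
  obtain ⟨F, rfl, hF⟩ := hfat j N
  have hhalf := card_le_two_mul_card_filter_lt (fun m ↦ by positivity) hu (by positivity) hN
  set G := {m ∈ F | ‖u m‖ ^ p < (‖u j‖ / 2) ^ p}
  have hsmall : ∀ m ∈ G, ‖u m‖ ≤ ‖u j‖ / 2 := fun m hm ↦
    ((Real.rpow_lt_rpow_iff (by positivity) (by positivity) hp).mp (Finset.mem_filter.mp hm).2).le
  have hnear : ∀ m ∈ G, c / (#F : ℝ) ^ (1 + α) ≤ k j m := fun m hm ↦
    hF m (Finset.mem_filter.mp hm).1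
  have hF₀ : (0 : ℝ) < #F := by exact_mod_cast hN₀
  calc c * ‖u j‖ ^ 2
      = 4 * (#F : ℝ) ^ α * (#F * ((‖u j‖ / 2) ^ 2 * (c / (#F : ℝ) ^ (1 + α)))) := by
        rw [Real.rpow_add hF₀, Real.rpow_one]
        field_simp
        norm_num
    _ ≤ 4 * (#F : ℝ) ^ α * (2 * #G * ((‖u j‖ / 2) ^ 2 * (c / (#F : ℝ) ^ (1 + α)))) := by gcongr
    _ = 8 * (#F : ℝ) ^ α * (#G * ((‖u j‖ / 2) ^ 2 * (c / (#F : ℝ) ^ (1 + α)))) := by ring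
    _ ≤ 8 * (#F : ℝ) ^ α * ∑' m, ‖u j - u m‖ ^ 2 * k j m := by
        gcongr
        exact card_mul_sq_norm_le_tsum_sq_norm_sub_mul hk hE hnear hsmall

lemma HasFatTail.mul_sq_norm_le_rpow (hfat : HasFatTail c α k) (hc : 0 ≤ c) (hα : 0 ≤ α)
    (hp : 0 < p) {j : ι} (hk : ∀ m, 0 ≤ k j m) (hu : Summable fun m ↦ ‖u m‖ ^ p)
    (hE : Summable fun m ↦ ‖u j - u m‖ ^ 2 * k j m) (hj : 0 < ‖u j‖) :
    c * ‖u j‖ ^ 2 ≤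
      8 * (4 * (∑' m, ‖u m‖ ^ p) / (‖u j‖ / 2) ^ p) ^ α * ∑' m, ‖u j - u m‖ ^ 2 * k j m := by
  have hj₂ : 0 < (‖u j‖ / 2) ^ p := by positivity
  have hjT : (‖u j‖ / 2) ^ p ≤ ∑' m, ‖u m‖ ^ p :=
    (Real.rpow_le_rpow (by positivity) (by linarith) hp.le).trans
      (hu.le_tsum j fun m _ ↦ by positivity)
  set x := 2 * (∑' m, ‖u m‖ ^ p) / (‖u j‖ / 2) ^ p with hx
  have hx₁ : 1 ≤ x := (one_le_div₀ hj₂).mpr (by linarith)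
  calc c * ‖u j‖ ^ 2 ≤ 8 * (⌈x⌉₊ : ℝ) ^ α * ∑' m, ‖u j - u m‖ ^ 2 * k j m :=
        hfat.mul_sq_norm_le hc hp hk hu hE hj (Nat.ceil_pos.mpr (by linarith))
          ((div_le_iff₀ hj₂).mp (Nat.le_ceil x))
    _ ≤ 8 * (2 * x) ^ α * ∑' m, ‖u j - u m‖ ^ 2 * k j m := by
        gcongr
        · exact tsum_nonneg fun m ↦ mul_nonneg (sq_nonneg _) (hk m)
        · exact Nat.ceil_le_two_mul (by linarith)
    _ = _ := by rw [hx, ← mul_div_assoc, ← mul_assoc]; norm_num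

lemma HasFatTail.mul_norm_rpow_le (hfat : HasFatTail c α k) (hc : 0 ≤ c) (hα : 0 ≤ α) (hp : 0 < p)
    (hpα : p * (1 - α) = 2) {j : ι} (hk : ∀ m, 0 ≤ k j m) (hu : Summable fun m ↦ ‖u m‖ ^ p)
    (hE : Summable fun m ↦ ‖u j - u m‖ ^ 2 * k j m) :
    c * ‖u j‖ ^ p ≤
      8 * (4 * 2 ^ p) ^ α * (∑' m, ‖u m‖ ^ p) ^ α * ∑' m, ‖u j - u m‖ ^ 2 * k j m := by
  set T := ∑' m, ‖u m‖ ^ p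
  set D := ∑' m, ‖u j - u m‖ ^ 2 * k j m
  have hT : 0 ≤ T := tsum_nonneg fun m ↦ by positivity
  have hD : 0 ≤ D := tsum_nonneg fun m ↦ mul_nonneg (sq_nonneg _) (hk m)
  rcases (norm_nonneg (u j)).eq_or_lt with hj | hj
  · rw [← hj, Real.zero_rpow hp.ne', mul_zero]
    positivity
  have hexp : ‖u j‖ ^ p = ‖u j‖ ^ 2 * (‖u j‖ ^ p) ^ α := by
    rw [← Real.rpow_mul hj.le, ← Real.rpow_natCast, ← Real.rpow_add hj]
    congr 1
    push_cast
    linarith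
  have hscale : (4 * T / (‖u j‖ / 2) ^ p) ^ α * (‖u j‖ ^ p) ^ α = (4 * 2 ^ p) ^ α * T ^ α := by
    rw [← Real.mul_rpow (by positivity) (by positivity), ← Real.mul_rpow (by positivity) hT,
      Real.div_rpow hj.le zero_le_two]
    congr 1
    field_simp
  calc c * ‖u j‖ ^ p = c * ‖u j‖ ^ 2 * (‖u j‖ ^ p) ^ α := by rw [mul_assoc, ← hexp]
    _ ≤ 8 * (4 * T / (‖u j‖ / 2) ^ p) ^ α * D * (‖u j‖ ^ p) ^ α := by
        have := hfat.mul_sq_norm_le_rpow hc hα hp hk hu hE hj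
        gcongr
    _ = 8 * ((4 * T / (‖u j‖ / 2) ^ p) ^ α * (‖u j‖ ^ p) ^ α) * D := by ring
    _ = 8 * (4 * 2 ^ p) ^ α * T ^ α * D := by rw [hscale, mul_assoc 8 _ (T ^ α)]

theorem HasFatTail.sobolev_inequality (hfat : HasFatTail c α k) (hc : 0 ≤ c) (hα : 0 ≤ α)
    (hp : 0 < p) (hpα : p * (1 - α) = 2) (hk : ∀ j m, 0 ≤ k j m)
    (hu : Summable fun j ↦ ‖u j‖ ^ p)
    (hE : Summable fun x : ι × ι ↦ ‖u x.1 - u x.2‖ ^ 2 * k x.1 x.2) :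
    c * (∑' j, ‖u j‖ ^ p) ^ (1 - α) ≤
      8 * (4 * 2 ^ p) ^ α * ∑' j, ∑' m, ‖u j - u m‖ ^ 2 * k j m := by
  set T := ∑' j, ‖u j‖ ^ p
  have hT₀ : 0 ≤ T := tsum_nonneg fun j ↦ by positivity
  rcases hT₀.eq_or_lt with hT | hT
  · rw [← hT, Real.zero_rpow (right_ne_zero_of_mul (hpα.trans_ne two_ne_zero)), mul_zero]
    have := fun j m ↦ mul_nonneg (sq_nonneg ‖u j - u m‖) (hk j m)
    exact mul_nonneg (by positivity) (tsum_nonneg fun j ↦ tsum_nonneg (this j))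
  have hsum : c * T ≤
      8 * (4 * 2 ^ p) ^ α * T ^ α * ∑' j, ∑' m, ‖u j - u m‖ ^ 2 * k j m := by
    rw [← tsum_mul_left, ← tsum_mul_left]
    exact (hu.mul_left c).tsum_le_tsum
      (fun j ↦ hfat.mul_norm_rpow_le hc hα hp hpα (hk j) hu (hE.prod_factor j)) (hE.prod.mul_left _)
  rw [Real.rpow_sub hT, Real.rpow_one, ← mul_div_assoc, div_le_iff₀ (by positivity)]
  linarith

end FatTail

lemma summable_norm_rpow_of_finite_support {ι E : Type*} [SeminormedAddCommGroup E] {u : ι → E}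
    (hu : (Function.support u).Finite) {p : ℝ} (hp : p ≠ 0) : Summable fun j ↦ ‖u j‖ ^ p :=
  summable_of_hasFiniteSupport <| hu.subset fun j hj hj₀ ↦ hj <| by
    simp [hj₀, Real.zero_rpow hp]

lemma summable_sq_norm_sub_mul {G E : Type*} [AddGroup G] [SeminormedAddCommGroup E] {u : G → E}
    {K : G → ℝ} (hu : Summable fun j ↦ ‖u j‖ ^ 2) (hK₀ : ∀ m, 0 ≤ K m) (hK : Summable K) :
    Summable fun x : G × G ↦ ‖u x.1 - u x.2‖ ^ 2 * K (x.1 - x.2) := by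
  have hprod : Summable fun x : G × G ↦ ‖u x.1‖ ^ 2 * K x.2 :=
    hu.mul_of_nonneg hK (fun j ↦ sq_nonneg _) hK₀
  have hfst : Summable fun x : G × G ↦ ‖u x.1‖ ^ 2 * K (x.1 - x.2) :=
    ((Equiv.refl G).prodShear Equiv.subLeft).summable_iff.mpr hprod
  have hsnd : Summable fun x : G × G ↦ ‖u x.2‖ ^ 2 * K (x.1 - x.2) :=
    ((Equiv.prodComm G G).trans ((Equiv.refl G).prodShear Equiv.subRight)).summable_iff.mpr hprod
  refine ((hfst.add hsnd).mul_left 2).of_nonneg_of_le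
    (fun x ↦ mul_nonneg (sq_nonneg _) (hK₀ _)) fun x ↦ ?_
  rw [← add_mul, ← mul_assoc]
  gcongr
  · exact hK₀ _
  · exact (pow_le_pow_left₀ (norm_nonneg _) (norm_sub_le _ _) 2).trans add_sq_le

section GammaRatio

variable {s x : ℝ}

lemma Gamma_add_le_Gamma_mul_rpow (hx : 0 < x) (hs₀ : 0 < s) (hs₁ : s < 1) :
    Real.Gamma (x + s) ≤ Real.Gamma x * x ^ s := by
  have hΓ := Real.Gamma_pos_of_pos hx
  calc Real.Gamma (x + s) = Real.Gamma ((1 - s) * x + s * (x + 1)) := by ring_nf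
    _ ≤ Real.Gamma x ^ (1 - s) * Real.Gamma (x + 1) ^ s :=
        Real.Gamma_mul_add_mul_le_rpow_Gamma_mul_rpow_Gamma hx (by linarith) (by linarith) hs₀
          (by ring)
    _ = Real.Gamma x * x ^ s := by
        rw [Real.Gamma_add_one hx.ne', Real.mul_rpow hx.le hΓ.le, mul_left_comm,
          ← Real.rpow_add hΓ, sub_add_cancel, Real.rpow_one, mul_comm]

lemma inv_two_mul_rpow_le_Gamma_sub_div_Gamma_add_one_add (hs₀ : 0 < s) (hs₁ : s < 1) (hx : s < x) :
    (2 * x ^ (1 + 2 * s))⁻¹ ≤ Real.Gamma (x - s) / Real.Gamma (x + 1 + s) := by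
  have hx₀ : 0 < x := hs₀.trans hx
  have := Real.Gamma_pos_of_pos (sub_pos.mpr hx)
  have hlower : Real.Gamma x ≤ Real.Gamma (x - s) * (x - s) ^ s := by
    simpa using Gamma_add_le_Gamma_mul_rpow (sub_pos.mpr hx) hs₀ hs₁
  have hupper : Real.Gamma (x + 1 + s) ≤ Real.Gamma (x - s) * (2 * x ^ (1 + 2 * s)) :=
    calc Real.Gamma (x + 1 + s) = (x + s) * Real.Gamma (x + s) := by
          rw [add_right_comm, Real.Gamma_add_one (by positivity)]
      _ ≤ (x + s) * (Real.Gamma x * x ^ s) := by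
          gcongr
          exact Gamma_add_le_Gamma_mul_rpow hx₀ hs₀ hs₁
      _ ≤ (x + x) * (Real.Gamma (x - s) * x ^ s * x ^ s) := by
          gcongr
          refine hlower.trans ?_
          gcongr
          linarith
      _ = Real.Gamma (x - s) * (2 * x ^ (1 + 2 * s)) := by
          rw [two_mul s, ← add_assoc, Real.rpow_add hx₀, Real.rpow_add hx₀, Real.rpow_one]
          ring
  rw [inv_eq_one_div, div_le_div_iff₀ (by positivity) (Real.Gamma_pos_of_pos (by positivity)),
    one_mul]
  exact hupper

lemma Gamma_sub_div_Gamma_add_one_add_eq_sub_div (hs : 0 < s) (hx : s < x) :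
    Real.Gamma (x - s) / Real.Gamma (x + 1 + s) =
      (Real.Gamma (x - s) / Real.Gamma (x + s) -
        Real.Gamma (x + 1 - s) / Real.Gamma (x + 1 + s)) / (2 * s) := by
  have hx₀ : 0 < x + s := by linarith
  have := Real.Gamma_pos_of_pos hx₀
  rw [add_right_comm, add_sub_right_comm, Real.Gamma_add_one hx₀.ne',
    Real.Gamma_add_one (sub_pos.mpr hx).ne']
  field_simp
  ring

lemma summable_Gamma_sub_div_Gamma_add_one_add (hs₀ : 0 < s) (hs₁ : s < 1) :
    Summable fun n : ℕ ↦ Real.Gamma ((n + 1 : ℕ) - s) / Real.Gamma ((n + 1 : ℕ) + 1 + s) := by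
  have hpos (n : ℕ) : s < (n + 1 : ℕ) := by
    push_cast
    linarith [n.cast_nonneg (α := ℝ)]
  set g : ℕ → ℝ := fun n ↦ Real.Gamma ((n + 1 : ℕ) - s) / Real.Gamma ((n + 1 : ℕ) + s)
  have hg (n : ℕ) : 0 ≤ g n :=
    div_nonneg (Real.Gamma_pos_of_pos (by linarith [hpos n])).le
      (Real.Gamma_pos_of_pos (by linarith [hpos n])).le
  refine summable_of_sum_range_le (c := g 0 / (2 * s)) (fun n ↦
    div_nonneg (Real.Gamma_pos_of_pos (by linarith [hpos n])).le
      (Real.Gamma_pos_of_pos (by linarith [hpos n])).le) fun n ↦ ?_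
  calc ∑ i ∈ Finset.range n, Real.Gamma ((i + 1 : ℕ) - s) / Real.Gamma ((i + 1 : ℕ) + 1 + s)
      = ∑ i ∈ Finset.range n, (g i - g (i + 1)) / (2 * s) :=
        Finset.sum_congr rfl fun i _ ↦ by
          simpa [g] using Gamma_sub_div_Gamma_add_one_add_eq_sub_div hs₀ (hpos i)
    _ = (g 0 - g n) / (2 * s) := by rw [← Finset.sum_div, Finset.sum_range_sub']
    _ ≤ g 0 / (2 * s) := by
        gcongr
        linarith [hg n]

end GammaRatio

section Kernel

variable {h s : ℝ}

/-- The constant `4 ^ s * Γ(1/2 + s) / (√π * |Γ(-s)|)` in `Ksh`, which is the part of the kernel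
depending on neither `h` nor `m`; as in `Ksh`, `|Γ(-s)|` is written `Γ(1 - s) / s`. -/
noncomputable def fracLaplacianConst (s : ℝ) : ℝ :=
  4 ^ s * Real.Gamma (1 / 2 + s) / (√Real.pi * (Real.Gamma (1 - s) / s))

lemma fracLaplacianConst_pos (hs₀ : 0 < s) (hs₁ : s < 1) : 0 < fracLaplacianConst s := by
  have := Real.Gamma_pos_of_pos (show 0 < 1 / 2 + s by linarith)
  have := Real.Gamma_pos_of_pos (show 0 < 1 - s by linarith)
  have := Real.pi_pos
  unfold fracLaplacianConst
  positivity

lemma Ksh_of_ne_zero {m : ℤ} (hm : m ≠ 0) :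
    Ksh h s m = fracLaplacianConst s / h ^ (2 * s) *
      (Real.Gamma (|(m : ℝ)| - s) / Real.Gamma (|(m : ℝ)| + 1 + s)) := by
  rw [Ksh, if_neg hm, ← fracLaplacianConst, div_mul_div_comm, mul_div_assoc]

lemma Ksh_neg (m : ℤ) : Ksh h s (-m) = Ksh h s m := by
  simp [Ksh]

lemma fracLaplacianConst_div_le_Ksh (hs₀ : 0 < s) (hs₁ : s < 1) (hh : 0 ≤ h) {m : ℤ} (hm : m ≠ 0) :
    fracLaplacianConst s / (2 * h ^ (2 * s)) / |(m : ℝ)| ^ (1 + 2 * s) ≤ Ksh h s m := by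
  have hm₁ : (1 : ℝ) ≤ |(m : ℝ)| := by exact_mod_cast Int.one_le_abs hm
  have := fracLaplacianConst_pos hs₀ hs₁
  calc fracLaplacianConst s / (2 * h ^ (2 * s)) / |(m : ℝ)| ^ (1 + 2 * s)
      = fracLaplacianConst s / h ^ (2 * s) * (2 * |(m : ℝ)| ^ (1 + 2 * s))⁻¹ := by ring
    _ ≤ Ksh h s m := by
      rw [Ksh_of_ne_zero hm]
      gcongr
      exact inv_two_mul_rpow_le_Gamma_sub_div_Gamma_add_one_add hs₀ hs₁ (by linarith)

lemma Ksh_nonneg (hs₀ : 0 < s) (hs₁ : s < 1) (hh : 0 ≤ h) (m : ℤ) : 0 ≤ Ksh h s m := by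
  rcases eq_or_ne m 0 with rfl | hm
  · simp [Ksh]
  · have := fracLaplacianConst_pos hs₀ hs₁
    exact le_trans (by positivity) (fracLaplacianConst_div_le_Ksh hs₀ hs₁ hh hm)

lemma summable_Ksh (hs₀ : 0 < s) (hs₁ : s < 1) : Summable (Ksh h s) := by
  have hnat : Summable fun n : ℕ ↦ Ksh h s n := by
    rw [← summable_nat_add_iff 1]
    refine ((summable_Gamma_sub_div_Gamma_add_one_add hs₀ hs₁).mul_left
      (fracLaplacianConst s / h ^ (2 * s))).congr fun n ↦ ?_
    rw [Ksh_of_ne_zero (by omega), Int.cast_natCast, Nat.abs_cast]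
  exact .of_nat_of_neg hnat (by simpa only [Ksh_neg] using hnat)

lemma hasFatTail_Ksh (hs₀ : 0 < s) (hs₁ : s < 1) (hh : 0 ≤ h) :
    HasFatTail (fracLaplacianConst s / (2 * h ^ (2 * s))) (2 * s)
      fun j m : ℤ ↦ Ksh h s (j - m) := by
  intro j N
  refine ⟨Finset.Ioc j (j + N), by simp, fun m hm ↦ ?_⟩
  obtain ⟨hjm, hmN⟩ := Finset.mem_Ioc.mp hm
  have hne : j - m ≠ 0 := by omega
  have hdist : |((j - m : ℤ) : ℝ)| ≤ N := by
    exact_mod_cast abs_le.mpr (⟨by omega, by omega⟩ : -(N : ℤ) ≤ j - m ∧ j - m ≤ N)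
  have : 0 < |((j - m : ℤ) : ℝ)| := abs_pos.mpr (by exact_mod_cast hne)
  have := fracLaplacianConst_pos hs₀ hs₁
  calc fracLaplacianConst s / (2 * h ^ (2 * s)) / (N : ℝ) ^ (1 + 2 * s)
      ≤ fracLaplacianConst s / (2 * h ^ (2 * s)) / |((j - m : ℤ) : ℝ)| ^ (1 + 2 * s) := by gcongr
    _ ≤ Ksh h s (j - m) := fracLaplacianConst_div_le_Ksh hs₀ hs₁ hh hne

end Kernel

theorem fractional_discrete_Sobolev_general (s : ℝ) (hs0 : 0 < s) (hs1 : s < 1 / 2) :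
    ∃ C : ℝ, 0 < C ∧ ∀ (E : Type*) [SeminormedAddCommGroup E] (h : ℝ), 0 < h → ∀ u : ℤ → E,
      Summable (fun j ↦ ‖u j‖ ^ (2 / (1 - 2 * s))) →
      Summable (fun x : ℤ × ℤ ↦ ‖u x.1 - u x.2‖ ^ 2 * Ksh h s (x.1 - x.2)) →
      (h * ∑' j : ℤ, ‖u j‖ ^ (2 / (1 - 2 * s))) ^ ((1 - 2 * s) / 2) ≤
        C * (h / 2 * ∑' j : ℤ, ∑' m : ℤ, ‖u j - u m‖ ^ 2 * Ksh h s (j - m)) ^ ((1 : ℝ) / 2) := by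
  have hs : s < 1 := by linarith
  have hs' : 0 < 1 - 2 * s := by linarith
  have hc := fracLaplacianConst_pos hs0 hs
  set p := 2 / (1 - 2 * s)
  set A : ℝ := 8 * (4 * 2 ^ p) ^ (2 * s)
  refine ⟨(4 * A / fracLaplacianConst s) ^ ((1 : ℝ) / 2), by positivity, fun E _ h hh u hu hE ↦ ?_⟩
  have hsob := (hasFatTail_Ksh hs0 hs hh.le).sobolev_inequality (by positivity) (by positivity)
    (by positivity) (div_mul_cancel₀ _ hs'.ne') (fun j m ↦ Ksh_nonneg hs0 hs hh.le _) hu hE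
  set T := ∑' j, ‖u j‖ ^ p
  set D := ∑' j, ∑' m, ‖u j - u m‖ ^ 2 * Ksh h s (j - m)
  have hT : 0 ≤ T := tsum_nonneg fun j ↦ by positivity
  have hD : 0 ≤ D := tsum_nonneg fun j ↦ tsum_nonneg fun m ↦
    mul_nonneg (sq_nonneg _) (Ksh_nonneg hs0 hs hh.le _)
  have hsq : (h * T) ^ (1 - 2 * s) ≤ 4 * A / fracLaplacianConst s * (h / 2 * D) := by
    rw [Real.mul_rpow hh.le hT, Real.rpow_sub hh, Real.rpow_one]
    rw [div_mul_eq_mul_div, div_le_iff₀ (by positivity)] at hsob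
    field_simp
    linarith
  calc (h * T) ^ ((1 - 2 * s) / 2) = ((h * T) ^ (1 - 2 * s)) ^ ((1 : ℝ) / 2) := by
        rw [← Real.rpow_mul (by positivity), mul_one_div]
    _ ≤ (4 * A / fracLaplacianConst s * (h / 2 * D)) ^ ((1 : ℝ) / 2) := by gcongr
    _ = _ := Real.mul_rpow (by positivity) (by positivity)

/-- Fractional discrete Sobolev inequality. -/
theorem fractional_discrete_Sobolev (s : ℝ) (hs0 : 0 < s) (hs1 : s < 1/2) :
    ∃ C : ℝ, 0 < C ∧ ∀ h : ℝ, 0 < h → ∀ u : ℤ → ℝ, (Function.support u).Finite →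
      (h * ∑' j : ℤ, |u j| ^ (2 / (1 - 2 * s))) ^ ((1 - 2 * s) / 2) ≤
        C * (h / 2 * ∑' j : ℤ, ∑' m : ℤ,
          |u j - u m| ^ (2 : ℝ) * Ksh h s (j - m)) ^ ((1 : ℝ) / 2) := by
  obtain ⟨C, hC, hsob⟩ := fractional_discrete_Sobolev_general s hs0 hs1
  refine ⟨C, hC, fun h hh u hu ↦ ?_⟩
  simp only [Real.rpow_two]
  have hp : 2 / (1 - 2 * s) ≠ 0 := div_ne_zero two_ne_zero (by linarith)
  have hu₂ : Summable fun j ↦ ‖u j‖ ^ 2 := by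
    simpa only [Real.rpow_two] using summable_norm_rpow_of_finite_support hu (two_ne_zero (α := ℝ))
  exact hsob ℝ h hh u (summable_norm_rpow_of_finite_support hu hp)
    (summable_sq_norm_sub_mul hu₂ (Ksh_nonneg hs0 (by linarith) hh.le)
      (summable_Ksh hs0 (by linarith)))
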